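/- Let (s_n)_{n ≥ 0} be a sequence of integers such that: there is a constant C with s_n ≤ C·n for all n ≥ 1, and the quantity (s_n − log n / log log n) · (log log n)² / (log n · log log log n) tends to infinity as n → ∞. Then there exists a non-empty family 𝓕 of finite graphs, each having at least one edge, such that sat(n,𝓕) = s_n for all sufficiently large n. -/

import Mathlib

open SimpleGraph Filter Topology

/-- `H` (on `β`) is contained in `G` (on `α`): `G` has a subgraph isomorphic to `H`. -/
def Contains {α β : Type*} (G : SimpleGraph α) (H : SimpleGraph β) : Prop :=
  ∃ f : β ↪ α, ∀ a b : β, H.Adj a b → G.Adj (f a) (f b)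

/-- A family of finite graphs, each given on a vertex set `Fin n`. -/
abbrev GraphFam := Set ((n : ℕ) × SimpleGraph (Fin n))

/-- `G` is `𝓕`-saturated: `G` contains no member of `𝓕`, but adding any missing edge to `G`
creates a member of `𝓕`. -/
def FamSaturated (𝓕 : GraphFam) {α : Type*} (G : SimpleGraph α) : Prop :=
  (∀ F ∈ 𝓕, ¬ Contains G F.2) ∧
    ∀ u v : α, u ≠ v → ¬ G.Adj u v →
      ∃ F ∈ 𝓕, Contains (G ⊔ SimpleGraph.fromEdgeSet {s(u, v)}) F.2

/-- `sat n 𝓕` is the minimum number of edges in an `𝓕`-saturated graph on `n` vertices. -/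
noncomputable def sat (n : ℕ) (𝓕 : GraphFam) : ℕ :=
  sInf {m | ∃ G : SimpleGraph (Fin n), FamSaturated 𝓕 G ∧ Nat.card G.edgeSet = m}

/-!
Choose graphs `G n` on `n` vertices with `s n` edges, whose non-isolated vertices have large degree
and none of which contains another one, and let `𝓕` consist of all graphs properly containing some
`G n`. Then `G n` is `𝓕`-saturated. Conversely, let `H` be `𝓕`-saturated on `n` vertices with fewer
edges. As `s n = O(n)`, some two non-adjacent vertices of `H` have small degree. Adding an edge
between them creates a member of `𝓕`, hence a copy of some `G i`; the copy cannot use the new edge,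
so `H` contains `G i`. As `H` is not in `𝓕`, it is contained in `G i` as well, so `i = n`, and `H`
has at least as many edges as `G n` after all.

There are enough such graphs because every large `n` with `s n = m` is at most
`exp (m * (log m - 3 * log (log m)))`. Up to isomorphism there are more bipartite graphs with `m`
edges, minimum degree at least `d` and about `m / log m` vertices in each class: one counts the ways
to extend a fixed sparse graph of minimum degree `d` inside the complete bipartite graph, and
divides by the number of permutations of the vertices. To make graphs with different `m`
incomparable, add two disjoint powers of cycles whose lengths encode `m`. Being connected and
regular of the same degree, these powers contain one another only if their lengths are equal, and
they contain triangles, so none of them fits into a bipartite graph.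
-/

theorem contains_iff_isContained {α β : Type*} {G : SimpleGraph α} {H : SimpleGraph β} :
    Contains G H ↔ H ⊑ G :=
  ⟨fun ⟨f, hf⟩ => ⟨⟨⟨f, hf _ _⟩, f.injective⟩⟩,
    fun ⟨f⟩ => ⟨f.toEmbedding, fun _ _ h => f.toHom.map_adj h⟩⟩

section EdgesAndDegrees

variable {α β : Type*}

theorem card_edgeSet_le_of_isContained [Finite β] {G : SimpleGraph α} {H : SimpleGraph β}
    (h : G ⊑ H) : Nat.card G.edgeSet ≤ Nat.card H.edgeSet :=
  h.elim fun f => Finite.card_le_of_embedding f.mapEdgeSet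

theorem card_le_of_isContained [Finite β] {G : SimpleGraph α} {H : SimpleGraph β}
    (h : G ⊑ H) : Nat.card α ≤ Nat.card β :=
  h.elim fun f => Finite.card_le_of_embedding f.toEmbedding

theorem isContained_map (G : SimpleGraph α) (f : α ↪ β) : G ⊑ G.map f :=
  (SimpleGraph.Embedding.map f G).isContained

theorem card_edgeSet_map (G : SimpleGraph α) (f : α ↪ β) :
    Nat.card (G.map f).edgeSet = Nat.card G.edgeSet := by
  rw [edgeSet_map]
  exact Nat.card_image_of_injective f.sym2Map.injective _

theorem eq_of_le_of_card_edgeSet_le [Finite α] {G H : SimpleGraph α} (hle : G ≤ H)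
    (hcard : Nat.card H.edgeSet ≤ Nat.card G.edgeSet) : G = H :=
  edgeSet_inj.1 <|
    Set.eq_of_subset_of_ncard_le (edgeSet_mono hle) hcard (Set.toFinite _)

theorem nonempty_iso_of_isContained [Finite α] {G H : SimpleGraph α} (h : G ⊑ H)
    (hcard : Nat.card H.edgeSet ≤ Nat.card G.edgeSet) : Nonempty (G ≃g H) := by
  obtain ⟨f⟩ := h
  have hmap : G.map f.toEmbedding = H := by
    refine eq_of_le_of_card_edgeSet_le ?_ (by rwa [card_edgeSet_map])
    exact (SimpleGraph.map_le_iff_le_comap ..).2 fun _ _ hab => f.toHom.map_adj hab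
  exact hmap ▸ ⟨SimpleGraph.Iso.map
    (Equiv.ofBijective f (Finite.injective_iff_bijective.1 f.injective)) G⟩

theorem isContained_of_isContained_map {G : SimpleGraph α} {H : SimpleGraph β} {γ : Type*}
    {e : β ↪ γ} (hG : ∀ a, (G.neighborSet a).Nonempty) (h : G ⊑ H.map e) : G ⊑ H := by
  obtain ⟨f⟩ := h
  have hrange : ∀ a, ∃ b, e b = f a := fun a => by
    obtain ⟨a', ha'⟩ := hG a
    obtain ⟨b, -, -, hb, -⟩ := (map_adj ..).1 (f.toHom.map_adj ha')
    exact ⟨b, hb⟩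
  choose g hg using hrange
  refine ⟨⟨⟨g, fun {a b} hab => ?_⟩, fun a b hab => f.injective ?_⟩⟩
  · have hfab : (H.map e).Adj (f a) (f b) := f.toHom.map_adj hab
    rwa [← hg, ← hg, map_adj_apply] at hfab
  · change f a = f b
    rw [← hg, ← hg]
    exact congrArg e hab

theorem sum_ncard_neighborSet [Fintype α] (G : SimpleGraph α) :
    ∑ x, (G.neighborSet x).ncard = 2 * Nat.card G.edgeSet := by
  classical
  rw [Nat.card_eq_fintype_card, ← edgeFinset_card, ← G.sum_degrees_eq_twice_card_edges]
  refine Finset.sum_congr rfl fun v _ => ?_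
  rw [← Nat.card_coe_set_eq, Nat.card_eq_fintype_card, card_neighborSet_eq_degree]

theorem card_mul_le_two_mul_card_edgeSet [Finite α] {G : SimpleGraph α} {d : ℕ}
    (hG : ∀ x, d ≤ (G.neighborSet x).ncard) : Nat.card α * d ≤ 2 * Nat.card G.edgeSet := by
  have := Fintype.ofFinite α
  rw [← sum_ncard_neighborSet, Nat.card_eq_fintype_card, ← smul_eq_mul]
  exact Finset.card_nsmul_le_sum _ _ _ fun x _ => hG x

theorem card_edgeSet_sum [Finite α] [Finite β] (G : SimpleGraph α) (H : SimpleGraph β) :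
    Nat.card (G ⊕g H).edgeSet = Nat.card G.edgeSet + Nat.card H.edgeSet := by
  rw [Nat.card_congr edgeSetSumEquiv, Nat.card_sum]

theorem le_ncard_neighborSet_sum {G : SimpleGraph α} {H : SimpleGraph β} {d : ℕ}
    (hG : ∀ x, d ≤ (G.neighborSet x).ncard) (hH : ∀ x, d ≤ (H.neighborSet x).ncard)
    (x : α ⊕ β) : d ≤ ((G ⊕g H).neighborSet x).ncard := by
  rcases x with x | x
  · rw [neighborSet_sum_inl, Set.ncard_image_of_injective _ Sum.inl_injective]
    exact hG x
  · rw [neighborSet_sum_inr, Set.ncard_image_of_injective _ Sum.inr_injective]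
    exact hH x

theorem ncard_neighborSet_map (G : SimpleGraph α) (f : α ↪ β) (a : α) :
    ((G.map f).neighborSet (f a)).ncard = (G.neighborSet a).ncard := by
  rw [← Set.ncard_image_of_injective _ f.injective]
  congr 1
  ext b
  simp only [mem_neighborSet, map_adj, Set.mem_image, f.apply_eq_iff_eq]
  grind

end EdgesAndDegrees

section Saturation

theorem mul_le_two_mul_card_edgeSet_of_adj_of_lt {α : Type*} [Finite α] {H : SimpleGraph α}
    {d : ℕ} (hadj : ∀ u v, u ≠ v → (H.neighborSet u).ncard < d → (H.neighborSet v).ncard < d →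
      H.Adj u v) :
    d * (Nat.card α - d) ≤ 2 * Nat.card H.edgeSet := by
  classical
  have := Fintype.ofFinite α
  let L : Finset α := {v | (H.neighborSet v).ncard < d}
  have hlow : L.card ≤ d := by
    rcases L.eq_empty_or_nonempty with hL | ⟨v, hv⟩
    · simp [hL]
    have hvd : (H.neighborSet v).ncard < d := by simpa [L] using hv
    have hclique : (L.erase v : Set α) ⊆ H.neighborSet v := fun u hu => by
      have hu : u ≠ v ∧ (H.neighborSet u).ncard < d := by simpa [L, and_comm] using hu
      exact hadj v u hu.1.symm hvd hu.2
    have hcard := Set.ncard_le_ncard hclique (Set.toFinite _)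
    rw [Set.ncard_coe_finset, Finset.card_erase_of_mem hv] at hcard
    omega
  calc d * (Nat.card α - d) ≤ Lᶜ.card * d := by
        rw [Finset.card_compl, Nat.card_eq_fintype_card, mul_comm]
        gcongr
    _ ≤ ∑ v ∈ Lᶜ, (H.neighborSet v).ncard := by
        rw [← smul_eq_mul]
        exact Finset.card_nsmul_le_sum _ _ _ fun v hv => by simpa [L] using hv
    _ ≤ ∑ v, (H.neighborSet v).ncard := Finset.sum_le_sum_of_subset (Finset.subset_univ _)
    _ = 2 * Nat.card H.edgeSet := sum_ncard_neighborSet H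

-- A vertex of `K` mapped to `u` or `v` would need degree more than `d` in `H` plus one edge, so
-- the copy of `K` avoids the new edge.
theorem isContained_of_isContained_sup_edge {α β : Type*} [Finite α] {H : SimpleGraph α}
    {K : SimpleGraph β} {d : ℕ} {u v : α}
    (hK : ∀ x y, K.Adj x y → d < (K.neighborSet x).ncard)
    (hu : (H.neighborSet u).ncard < d) (hv : (H.neighborSet v).ncard < d)
    (h : K ⊑ H ⊔ fromEdgeSet {s(u, v)}) : K ⊑ H := by
  obtain ⟨f⟩ := h
  have hf : Function.Injective f := f.injective
  have havoid : ∀ p q : α, s(p, q) = s(u, v) → (H.neighborSet p).ncard < d →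
      ∀ x y, K.Adj x y → f x ≠ p := by
    rintro p q hpq hp x y hxy rfl
    have hsub : f '' K.neighborSet x ⊆ insert q (H.neighborSet (f x)) := by
      rintro _ ⟨z, hz, rfl⟩
      rcases f.toHom.map_adj hz with h | h
      · exact Or.inr h
      · exact Or.inl (Sym2.congr_right.1 (((fromEdgeSet_adj _).1 h).1.trans hpq.symm))
    have hle := Set.ncard_le_ncard hsub (Set.toFinite _)
    rw [Set.ncard_image_of_injective _ hf] at hle
    have := Set.ncard_insert_le q (H.neighborSet (f x))
    have := hK x y hxy
    omega
  refine ⟨⟨⟨f, fun {a b} hab => ?_⟩, hf⟩⟩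
  rcases f.toHom.map_adj hab with h | h
  · exact h
  · rw [fromEdgeSet_adj, Set.mem_singleton_iff, Sym2.eq_iff] at h
    rcases h.1 with ⟨ha, -⟩ | ⟨ha, -⟩
    · exact absurd ha (havoid u v rfl hu a b hab)
    · exact absurd ha (havoid v u Sym2.eq_swap hv a b hab)

/-- The family of all finite graphs properly containing `G i` for some `i ≥ N`, where a graph with
the same edges but more vertices counts as a proper supergraph. For suitable sequences `G` of
graphs on `n` vertices, `G n` is a saturated graph with the fewest edges for this family. -/
def properSupergraphs (N : ℕ) (G : ∀ n, SimpleGraph (Fin n)) : GraphFam :=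
  {F | ∃ i, N ≤ i ∧ G i ⊑ F.2 ∧ ¬ F.2 ⊑ G i}

variable {N : ℕ} {G : ∀ n, SimpleGraph (Fin n)}

theorem le_of_isContained_fin {i n : ℕ} {H : SimpleGraph (Fin i)} {K : SimpleGraph (Fin n)}
    (h : H ⊑ K) : i ≤ n := by
  simpa only [Nat.card_fin] using card_le_of_isContained h

theorem properSupergraphs_nonempty : (properSupergraphs N G).Nonempty := by
  refine ⟨⟨N + 1, ⊤⟩, N, le_rfl, isContained_top_iff.2 ⟨Fin.castSuccEmb⟩, fun h => ?_⟩
  exact N.not_succ_le_self (le_of_isContained_fin h)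

theorem famSaturated_properSupergraphs {n : ℕ} (hn : N ≤ n)
    (hfree : ∀ i, N ≤ i → i < n → ¬ G i ⊑ G n) :
    FamSaturated (properSupergraphs N G) (G n) := by
  refine ⟨?_, fun u v huv hadj => ?_⟩
  · rintro F ⟨i, hi, hiF, hFi⟩ hF
    rw [contains_iff_isContained] at hF
    have hin : G i ⊑ G n := hiF.trans hF
    rcases (le_of_isContained_fin hin).lt_or_eq with hlt | rfl
    · exact hfree i hi hlt hin
    · exact hFi hF
  · refine ⟨⟨n, G n ⊔ fromEdgeSet {s(u, v)}⟩, ⟨n, hn, .of_le le_sup_left, fun h => hadj ?_⟩,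
      contains_iff_isContained.2 .rfl⟩
    rw [eq_of_le_of_card_edgeSet_le (le_sup_left : G n ≤ G n ⊔ fromEdgeSet {s(u, v)})
      (card_edgeSet_le_of_isContained h)]
    simp [huv]

theorem card_edgeSet_le_of_famSaturated_properSupergraphs {c n : ℕ}
    (hn : (2 * c + 1) * (2 * c + 1) ≤ n) (hcard : Nat.card (G n).edgeSet ≤ c * n)
    (hdeg : ∀ i, N ≤ i → ∀ x y, (G i).Adj x y → 2 * c + 1 < ((G i).neighborSet x).ncard)
    {H : SimpleGraph (Fin n)} (hH : FamSaturated (properSupergraphs N G) H) :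
    Nat.card (G n).edgeSet ≤ Nat.card H.edgeSet := by
  by_contra! hlt
  have hmul := mul_le_two_mul_card_edgeSet_of_adj_of_lt (d := 2 * c + 1) (H := H) <| by
    intro u v huv hu hv
    by_contra hadj
    obtain ⟨F, ⟨i, hi, hiF, -⟩, hF⟩ := hH.2 u v huv hadj
    have hiH : G i ⊑ H := isContained_of_isContained_sup_edge (hdeg i hi) hu hv
      (hiF.trans (contains_iff_isContained.1 hF))
    have hHi : H ⊑ G i := by
      by_contra hHi
      exact hH.1 ⟨n, H⟩ ⟨i, hi, hiH, hHi⟩ (contains_iff_isContained.2 .rfl)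
    obtain rfl : i = n := (le_of_isContained_fin hiH).antisymm (le_of_isContained_fin hHi)
    exact hlt.not_ge (card_edgeSet_le_of_isContained hiH)
  rw [Nat.card_fin] at hmul
  obtain ⟨r, rfl⟩ := Nat.exists_eq_add_of_le hn
  have hd : 2 * c + 1 ≤ (2 * c + 1) * (2 * c + 1) + r := by nlinarith
  zify [hd] at *
  nlinarith

theorem sat_properSupergraphs {c n : ℕ} (hn : N ≤ n) (hn' : (2 * c + 1) * (2 * c + 1) ≤ n)
    (hcard : Nat.card (G n).edgeSet ≤ c * n)
    (hdeg : ∀ i, N ≤ i → ∀ x y, (G i).Adj x y → 2 * c + 1 < ((G i).neighborSet x).ncard)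
    (hfree : ∀ i, N ≤ i → i < n → ¬ G i ⊑ G n) :
    sat n (properSupergraphs N G) = Nat.card (G n).edgeSet := by
  have hsat := famSaturated_properSupergraphs hn hfree
  refine le_antisymm (Nat.sInf_le ⟨G n, hsat, rfl⟩) (le_csInf ⟨_, G n, hsat, rfl⟩ ?_)
  rintro _ ⟨H, hH, rfl⟩
  exact card_edgeSet_le_of_famSaturated_properSupergraphs hn' hcard hdeg hH

end Saturation

section Components

variable {α β γ : Type*}

theorem isContained_or_isContained_of_isContained_sum {H : SimpleGraph γ} {G₁ : SimpleGraph α}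
    {G₂ : SimpleGraph β} (hH : H.Preconnected) (h : H ⊑ G₁ ⊕g G₂) : H ⊑ G₁ ∨ H ⊑ G₂ := by
  obtain ⟨f⟩ := h
  have hf : Function.Injective f := f.injective
  have hreach : ∀ x y, (G₁ ⊕g G₂).Reachable (f x) (f y) := fun x y => (hH x y).map f.toHom
  by_cases hleft : ∀ x, ∃ a, f x = .inl a
  · choose g hg using hleft
    refine .inl ⟨⟨⟨g, fun {x y} hxy => ?_⟩, fun x y hxy => hf ?_⟩⟩
    · simpa [hg] using f.toHom.map_adj hxy
    · rw [hg, hg]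
      exact congrArg Sum.inl hxy
  · obtain ⟨x, hx⟩ := not_forall.1 hleft
    have hright : ∀ y, ∃ b, f y = .inr b := fun y => by
      rcases hfx : f x with a | b
      · exact absurd ⟨a, hfx⟩ hx
      rcases hfy : f y with a | b'
      · exact absurd (hfy ▸ hfx ▸ hreach y x) (not_reachable_sum_inl_inr a b)
      · exact ⟨b', rfl⟩
    choose g hg using hright
    refine .inr ⟨⟨⟨g, fun {x y} hxy => ?_⟩, fun x y hxy => hf ?_⟩⟩
    · simpa [hg] using f.toHom.map_adj hxy
    · rw [hg, hg]
      exact congrArg Sum.inr hxy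

theorem card_eq_of_isContained_of_ncard_neighborSet_le [Nonempty α] [Finite β]
    {H : SimpleGraph α} {G : SimpleGraph β} {d : ℕ} (hH : ∀ x, d ≤ (H.neighborSet x).ncard)
    (hG : ∀ x, (G.neighborSet x).ncard ≤ d) (hconn : G.Preconnected) (h : H ⊑ G) :
    Nat.card α = Nat.card β := by
  obtain ⟨f⟩ := h
  have hf : Function.Injective f := f.injective
  have hnbr : ∀ x, f '' H.neighborSet x = G.neighborSet (f x) := fun x => by
    refine Set.eq_of_subset_of_ncard_le ?_ ?_ (Set.toFinite _)
    · rintro _ ⟨y, hy, rfl⟩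
      exact f.toHom.map_adj hy
    · rw [Set.ncard_image_of_injective _ hf]
      exact (hG _).trans (hH _)
  have hrange : ∀ x y, x ∈ Set.range f → G.Reachable x y → y ∈ Set.range f := by
    rintro x y hx ⟨p⟩
    induction p with
    | nil => exact hx
    | cons hadj _ ih =>
      obtain ⟨a, rfl⟩ := hx
      obtain ⟨b, -, hb⟩ := (hnbr a).ge hadj
      exact ih ⟨b, hb⟩
  obtain ⟨x⟩ := ‹Nonempty α›
  exact Nat.card_eq_of_bijective f ⟨hf, fun y => hrange (f x) y ⟨x, rfl⟩ (hconn _ _)⟩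

end Components

section CyclePower

/-- The `d`-th power of the cycle of length `k`: distinct residues are adjacent when they differ by
at most `d`. For `2 * d < k` it is `2 * d`-regular. -/
def cyclePower (k d : ℕ) : SimpleGraph (ZMod k) :=
  circulantGraph ((↑) '' Set.Icc (1 : ℤ) d)

variable {k d : ℕ}

theorem cyclePower_adj (h : 2 * d < k) {x y : ZMod k} :
    (cyclePower k d).Adj x y ↔ ∃ z : ℤ, z ∈ Set.Icc (-d : ℤ) d \ {0} ∧ x + z = y := by
  rw [cyclePower, circulantGraph_adj]
  constructor
  · rintro ⟨-, ⟨z, hz, hxy⟩ | ⟨z, hz, hxy⟩⟩ <;> rw [Set.mem_Icc] at hz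
    · exact ⟨-z, by simp; omega, by rw [Int.cast_neg, hxy]; abel⟩
    · exact ⟨z, by simp; omega, by rw [hxy]; abel⟩
  · rintro ⟨z, ⟨⟨hz₁, hz₂⟩, hz₀⟩, rfl⟩
    rw [Set.mem_singleton_iff] at hz₀
    refine ⟨fun heq => hz₀ ?_, ?_⟩
    · rw [left_eq_add, ZMod.intCast_zmod_eq_zero_iff_dvd] at heq
      exact Int.eq_zero_of_abs_lt_dvd heq (by rw [abs_lt]; omega)
    · rcases lt_or_gt_of_ne hz₀ with hneg | hpos
      · exact .inl ⟨-z, by simp; omega, by simp⟩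
      · exact .inr ⟨z, by simp; omega, by simp⟩

theorem ncard_neighborSet_cyclePower (h : 2 * d < k) (x : ZMod k) :
    ((cyclePower k d).neighborSet x).ncard = 2 * d := by
  have himage : (cyclePower k d).neighborSet x =
      (fun z : ℤ => x + z) '' (Set.Icc (-d : ℤ) d \ {0}) :=
    Set.ext fun y => cyclePower_adj h
  have hinj : Set.InjOn (fun z : ℤ => x + (z : ZMod k)) (Set.Icc (-d : ℤ) d \ {0}) := by
    rintro a ⟨ha, -⟩ b ⟨hb, -⟩ hab
    rw [Set.mem_Icc] at ha hb
    have hdvd : (k : ℤ) ∣ b - a :=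
      (ZMod.intCast_eq_intCast_iff_dvd_sub a b k).1 (add_left_cancel hab)
    have := Int.eq_zero_of_abs_lt_dvd hdvd (by rw [abs_lt]; omega)
    omega
  rw [himage, hinj.ncard_image, Set.ncard_sdiff_singleton_of_mem (by simp),
    ← Finset.coe_Icc, Set.ncard_coe_finset, Int.card_Icc]
  omega

theorem card_edgeSet_cyclePower (h : 2 * d < k) : Nat.card (cyclePower k d).edgeSet = d * k := by
  have : NeZero k := ⟨by omega⟩
  have hsum := sum_ncard_neighborSet (cyclePower k d)
  simp only [ncard_neighborSet_cyclePower h, Finset.sum_const, Finset.card_univ, ZMod.card,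
    smul_eq_mul] at hsum
  linarith

theorem cyclePower_preconnected (hd : 0 < d) (h : 2 * d < k) : (cyclePower k d).Preconnected := by
  have : NeZero k := ⟨by omega⟩
  have hzero : ∀ n : ℕ, (cyclePower k d).Reachable 0 n := fun n => by
    induction n with
    | zero => exact Nat.cast_zero (R := ZMod k) ▸ .rfl
    | succ n ih =>
      refine ih.trans (Adj.reachable ((cyclePower_adj h).2 ⟨1, by simp; omega, by simp⟩))
  intro x y
  rw [← ZMod.natCast_zmod_val x, ← ZMod.natCast_zmod_val y]
  exact (hzero _).symm.trans (hzero _)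

theorem not_cliqueFree_three_cyclePower (hd : 2 ≤ d) (h : 2 * d < k) :
    ¬ (cyclePower k d).CliqueFree 3 := fun hfree => by
  refine hfree {0, 1, 2} (is3Clique_triple_iff.2 ⟨?_, ?_, ?_⟩)
  · exact (cyclePower_adj h).2 ⟨1, by simp; omega, by simp⟩
  · exact (cyclePower_adj h).2 ⟨2, by simp; omega, by simp⟩
  · exact (cyclePower_adj h).2 ⟨1, by simp; omega, by norm_num⟩

theorem eq_of_cyclePower_isContained_cyclePower {l : ℕ} (hd : 0 < d) (hk : 2 * d < k)
    (hl : 2 * d < l) (h : cyclePower k d ⊑ cyclePower l d) : k = l := by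
  have : NeZero l := ⟨by omega⟩
  simpa only [Nat.card_zmod] using card_eq_of_isContained_of_ncard_neighborSet_le
    (fun x => (ncard_neighborSet_cyclePower hk x).ge)
    (fun x => (ncard_neighborSet_cyclePower hl x).le) (cyclePower_preconnected hd hl) h

/-- The lengths `k > 2 * d` such that the `d`-th power of the cycle of length `k` is contained in
`G`; an invariant used to tell apart graphs with different numbers of edges. -/
def cyclePowerLengths (d : ℕ) {α : Type*} (G : SimpleGraph α) : Set ℕ :=
  {k | 2 * d < k ∧ cyclePower k d ⊑ G}

variable {α β : Type*} {G : SimpleGraph α} {H : SimpleGraph β}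

theorem cyclePowerLengths_mono (h : G ⊑ H) : cyclePowerLengths d G ⊆ cyclePowerLengths d H :=
  fun _ hk => ⟨hk.1, hk.2.trans h⟩

theorem cyclePowerLengths_sum (hd : 0 < d) :
    cyclePowerLengths d (G ⊕g H) = cyclePowerLengths d G ∪ cyclePowerLengths d H := by
  refine Set.Subset.antisymm (fun k hk => ?_) (Set.union_subset ?_ ?_)
  · exact (isContained_or_isContained_of_isContained_sum
      (cyclePower_preconnected hd hk.1) hk.2).imp (⟨hk.1, ·⟩) (⟨hk.1, ·⟩)
  · exact cyclePowerLengths_mono ⟨Embedding.sumInl.toCopy⟩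
  · exact cyclePowerLengths_mono ⟨Embedding.sumInr.toCopy⟩

theorem cyclePowerLengths_cyclePower (hd : 0 < d) (hk : 2 * d < k) :
    cyclePowerLengths d (cyclePower k d) = {k} :=
  Set.Subset.antisymm (fun _ hl => eq_of_cyclePower_isContained_cyclePower hd hl.1 hk hl.2)
    (Set.singleton_subset_iff.2 ⟨hk, .rfl⟩)

theorem cyclePowerLengths_eq_empty (hd : 2 ≤ d) (hG : G.CliqueFree 3) :
    cyclePowerLengths d G = ∅ :=
  Set.eq_empty_of_forall_notMem fun _ hk =>
    not_cliqueFree_three_cyclePower hd hk.1 (hG.comap hk.2)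

end CyclePower

section Counting

theorem edgeSet_fromEdgeSet_of_subset_edgeSet {α : Type*} {Q : SimpleGraph α} {E : Set (Sym2 α)}
    (hE : E ⊆ Q.edgeSet) : (fromEdgeSet E).edgeSet = E := by
  rw [edgeSet_fromEdgeSet, sdiff_eq_left]
  exact Set.disjoint_left.2 fun e he => Q.not_isDiag_of_mem_edgeSet (hE he)

theorem map_eq_of_iso {α β : Type*} {G : SimpleGraph α} {H : SimpleGraph β} (f : G ≃g H) :
    G.map f.toEquiv = H := by
  ext a b
  rw [← f.apply_symm_apply a, ← f.apply_symm_apply b, f.map_adj_iff]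
  exact map_adj_apply (f := f.toEquiv.toEmbedding)

variable {α : Type*} [Finite α]

theorem exists_le_card_edgeSet_le_mul_card {Q : SimpleGraph α} {t : ℕ}
    (hQ : ∀ x, t ≤ (Q.neighborSet x).ncard) :
    ∃ P ≤ Q, (∀ x, t ≤ (P.neighborSet x).ncard) ∧ Nat.card P.edgeSet ≤ t * Nat.card α := by
  have := Fintype.ofFinite α
  choose S hSQ hS using fun x => Set.exists_subset_card_eq (hQ x)
  refine ⟨fromRel fun x y => y ∈ S x, ?_, fun x => ?_, ?_⟩
  · rintro x y ⟨-, h | h⟩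
    · exact hSQ x h
    · exact (hSQ y h).symm
  · rw [← hS x]
    exact Set.ncard_le_ncard (fun y hy => ⟨(hSQ x hy).ne, .inl hy⟩) (Set.toFinite _)
  · have hsub : (fromRel fun x y => y ∈ S x).edgeSet ⊆
        Set.range fun p : Σ x, S x => s(p.1, (p.2 : α)) := by
      rintro ⟨x, y⟩ ⟨-, h | h⟩
      · exact ⟨⟨x, y, h⟩, rfl⟩
      · exact ⟨⟨y, x, h⟩, Sym2.eq_swap⟩
    calc Nat.card (fromRel fun x y => y ∈ S x).edgeSet
        ≤ Nat.card (Set.range fun p : Σ x, S x => s(p.1, (p.2 : α))) :=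
          Set.ncard_le_ncard hsub (Set.toFinite _)
      _ ≤ Nat.card (Σ x, S x) := Finite.card_range_le _
      _ = t * Nat.card α := by
          simp [Nat.card_sigma, hS, mul_comm]

theorem exists_le_card_edgeSet_eq_mul_card {Q : SimpleGraph α} {t : ℕ}
    (hQ : ∀ x, t ≤ (Q.neighborSet x).ncard) (hcard : t * Nat.card α ≤ Nat.card Q.edgeSet) :
    ∃ P ≤ Q, (∀ x, t ≤ (P.neighborSet x).ncard) ∧ Nat.card P.edgeSet = t * Nat.card α := by
  obtain ⟨P, hPQ, hP, hPcard⟩ := exists_le_card_edgeSet_le_mul_card hQ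
  obtain ⟨E, hPE, hEQ, hE⟩ :=
    Set.exists_subsuperset_card_eq (edgeSet_mono hPQ) hPcard hcard
  have hedge : (fromEdgeSet E).edgeSet = E := edgeSet_fromEdgeSet_of_subset_edgeSet hEQ
  refine ⟨fromEdgeSet E, ?_, fun x => (hP x).trans (Set.ncard_le_ncard ?_ (Set.toFinite _)), ?_⟩
  · rwa [← edgeSet_subset_edgeSet, hedge]
  · refine neighborSet_mono ?_ x
    rwa [← edgeSet_subset_edgeSet, hedge]
  · rwa [hedge]

theorem choose_le_ncard_setOf_card_edgeSet_eq {P Q : SimpleGraph α} (hPQ : P ≤ Q) (e : ℕ) :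
    (Nat.card Q.edgeSet - Nat.card P.edgeSet).choose e ≤
      {G | P ≤ G ∧ G ≤ Q ∧ Nat.card G.edgeSet = Nat.card P.edgeSet + e}.ncard := by
  classical
  have := Fintype.ofFinite α
  let S : Finset (Sym2 α) := (Q.edgeSet \ P.edgeSet).toFinset
  have hS : S.card = Nat.card Q.edgeSet - Nat.card P.edgeSet := by
    rw [← Set.ncard_coe_finset, Set.coe_toFinset, Set.ncard_sdiff (edgeSet_mono hPQ)]
    rfl
  have hQ : ∀ T ⊆ S, P.edgeSet ∪ T ⊆ Q.edgeSet := fun T hT =>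
    Set.union_subset (edgeSet_mono hPQ) fun e he => (Set.mem_toFinset.1 (hT he)).1
  have hdisj : ∀ T ⊆ S, Disjoint P.edgeSet (T : Set (Sym2 α)) := fun T hT =>
    Set.disjoint_right.2 fun e he => (Set.mem_toFinset.1 (hT he)).2
  have hedge : ∀ T ⊆ S, (fromEdgeSet (P.edgeSet ∪ T)).edgeSet = P.edgeSet ∪ T := fun T hT =>
    edgeSet_fromEdgeSet_of_subset_edgeSet (hQ T hT)
  rw [← hS, ← Finset.card_powersetCard, ← Set.ncard_coe_finset]
  refine Set.ncard_le_ncard_of_injOn (fun T => fromEdgeSet (P.edgeSet ∪ T)) ?_ ?_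
    (Set.toFinite _)
  · intro T hT
    obtain ⟨hTS, hTe⟩ := Finset.mem_powersetCard.1 hT
    refine ⟨?_, ?_, ?_⟩
    · rw [← edgeSet_subset_edgeSet, hedge T hTS]
      exact Set.subset_union_left
    · rw [← edgeSet_subset_edgeSet, hedge T hTS]
      exact hQ T hTS
    · rw [hedge T hTS, Nat.card_coe_set_eq, Set.ncard_union_eq (hdisj T hTS),
        Set.ncard_coe_finset, hTe, Nat.card_coe_set_eq]
  · intro T hT T' hT' h
    have hTS := (Finset.mem_powersetCard.1 hT).1
    have hTS' := (Finset.mem_powersetCard.1 hT').1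
    have h := congrArg (fun G => edgeSet G \ P.edgeSet) h
    simp only [hedge T hTS, hedge T' hTS'] at h
    rw [Set.union_sdiff_cancel_left (hdisj T hTS).le_bot,
      Set.union_sdiff_cancel_left (hdisj T' hTS').le_bot] at h
    exact Finset.coe_injective h

theorem choose_le_ncard_setOf_le_ncard_neighborSet {Q : SimpleGraph α} {t : ℕ}
    (hQ : ∀ x, t ≤ (Q.neighborSet x).ncard) (hcard : t * Nat.card α ≤ Nat.card Q.edgeSet) (e : ℕ) :
    (Nat.card Q.edgeSet - t * Nat.card α).choose e ≤
      {G | G ≤ Q ∧ (∀ x, t ≤ (G.neighborSet x).ncard) ∧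
        Nat.card G.edgeSet = t * Nat.card α + e}.ncard := by
  obtain ⟨P, hPQ, hP, hPcard⟩ := exists_le_card_edgeSet_eq_mul_card hQ hcard
  rw [← hPcard]
  refine (choose_le_ncard_setOf_card_edgeSet_eq hPQ e).trans ?_
  refine Set.ncard_le_ncard (fun G ⟨hPG, hGQ, hG⟩ => ⟨hGQ, fun x => ?_, hG⟩) (Set.toFinite _)
  exact (hP x).trans (Set.ncard_le_ncard (neighborSet_mono hPG x) (Set.toFinite _))

-- Among graphs with equally many edges containment is isomorphism, and an isomorphism class on
-- `α` has at most `(Nat.card α)!` members.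
theorem exists_subset_ncard_le_factorial_mul {𝒜 : Set (SimpleGraph α)} {m : ℕ}
    (h𝒜 : ∀ G ∈ 𝒜, Nat.card G.edgeSet = m) :
    ∃ ℬ ⊆ 𝒜, ℬ.Pairwise (fun G H => ¬ G ⊑ H) ∧
      𝒜.ncard ≤ (Nat.card α).factorial * ℬ.ncard := by
  let isoClass : SimpleGraph α → Set (SimpleGraph α) := fun G => {H | Nonempty (G ≃g H)}
  have hiso : ∀ {G H : SimpleGraph α}, Nonempty (G ≃g H) → isoClass G = isoClass H :=
    fun ⟨f⟩ => Set.ext fun K => ⟨fun ⟨g⟩ => ⟨f.symm.trans g⟩, fun ⟨g⟩ => ⟨f.trans g⟩⟩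
  obtain ⟨ℬ, hℬ𝒜, hbij⟩ := Set.exists_subset_bijOn 𝒜 isoClass
  refine ⟨ℬ, hℬ𝒜, fun G hG H hH hne hGH => hne (hbij.injOn hG hH (hiso ?_)), ?_⟩
  · exact nonempty_iso_of_isContained hGH (by rw [h𝒜 G (hℬ𝒜 hG), h𝒜 H (hℬ𝒜 hH)])
  have hcover : 𝒜 ⊆ (fun p : Equiv.Perm α × SimpleGraph α => p.2.map p.1) '' Set.univ ×ˢ ℬ := by
    intro G hG
    obtain ⟨H, hH, hHG⟩ := hbij.surjOn ⟨G, hG, rfl⟩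
    have hmem : G ∈ isoClass H := hHG ▸ ⟨Iso.refl⟩
    obtain ⟨f⟩ := hmem
    exact ⟨⟨f.toEquiv, H⟩, ⟨trivial, hH⟩, map_eq_of_iso f⟩
  calc 𝒜.ncard ≤ (Set.univ ×ˢ ℬ : Set (Equiv.Perm α × SimpleGraph α)).ncard :=
        (Set.ncard_le_ncard hcover (Set.toFinite _)).trans (Set.ncard_image_le (Set.toFinite _))
    _ = (Nat.card α).factorial * ℬ.ncard := by
        rw [Set.ncard_prod, Set.ncard_univ, Nat.card_perm]

end Counting

section Marking

/-- The even one of the two cycle lengths that encode the number `m` (through `Nat.unpair`) by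
`d`-th powers of cycles. -/
def evenMark (d m : ℕ) : ℕ := 2 * (m.unpair.1 + d + 1)

/-- The odd one of the two cycle lengths that encode the number `m` (through `Nat.unpair`) by
`d`-th powers of cycles. -/
def oddMark (d m : ℕ) : ℕ := 2 * (m.unpair.2 + d + 1) + 1

theorem two_mul_lt_evenMark (d m : ℕ) : 2 * d < evenMark d m := by
  unfold evenMark
  omega

theorem two_mul_lt_oddMark (d m : ℕ) : 2 * d < oddMark d m := by
  unfold oddMark
  omega

instance (d m : ℕ) : NeZero (evenMark d m) := ⟨(two_mul_lt_evenMark d m).ne_bot⟩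

instance (d m : ℕ) : NeZero (oddMark d m) := ⟨(two_mul_lt_oddMark d m).ne_bot⟩

theorem eq_of_marks_subset {d m n : ℕ}
    (h : ({evenMark d m, oddMark d m} : Set ℕ) ⊆ {evenMark d n, oddMark d n}) : m = n := by
  obtain ⟨heven, hodd⟩ := Set.pair_subset_iff.1 h
  simp only [Set.mem_insert_iff, Set.mem_singleton_iff, evenMark, oddMark] at heven hodd
  rw [← Nat.pair_unpair m, ← Nat.pair_unpair n, Nat.pair_eq_pair]
  omega

theorem unpair_fst_add_unpair_snd_le (m : ℕ) : m.unpair.1 + m.unpair.2 ≤ 2 * m.sqrt := by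
  have hpair := Nat.max_sq_add_min_le_pair m.unpair.1 m.unpair.2
  rw [Nat.pair_unpair] at hpair
  have hmax : max m.unpair.1 m.unpair.2 ≤ m.sqrt := Nat.le_sqrt'.2 (by omega)
  omega

theorem evenMark_add_oddMark_le (d m : ℕ) :
    evenMark d m + oddMark d m ≤ 4 * m.sqrt + 4 * d + 5 := by
  have := unpair_fst_add_unpair_snd_le m
  unfold evenMark oddMark
  omega

/-- A graph with `m` edges and minimum degree at least `d` that displays the number `m` in the
lengths of the cycles whose `d`-th powers it contains. -/
structure IsMarked (d m : ℕ) {α : Type*} (G : SimpleGraph α) : Prop where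
  card_edgeSet : Nat.card G.edgeSet = m
  le_ncard_neighborSet : ∀ x, d ≤ (G.neighborSet x).ncard
  cyclePowerLengths_eq : cyclePowerLengths d G = {evenMark d m, oddMark d m}

theorem IsMarked.eq_of_isContained {α β : Type*} {d m n : ℕ} {G : SimpleGraph α}
    {H : SimpleGraph β} (hG : IsMarked d m G) (hH : IsMarked d n H) (h : G ⊑ H) : m = n := by
  have hsub := cyclePowerLengths_mono (d := d) h
  rw [hG.cyclePowerLengths_eq, hH.cyclePowerLengths_eq] at hsub
  exact eq_of_marks_subset hsub

/-- The disjoint union of the two cycle powers that encode the number `m`. -/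
abbrev markGraph (d m : ℕ) : SimpleGraph (ZMod (evenMark d m) ⊕ ZMod (oddMark d m)) :=
  cyclePower (evenMark d m) d ⊕g cyclePower (oddMark d m) d

theorem isMarked_sum_markGraph {α : Type*} [Finite α] {B : SimpleGraph α} {d m : ℕ}
    (hd : 2 ≤ d) (hB : ∀ x, d ≤ (B.neighborSet x).ncard)
    (hfree : B.CliqueFree 3)
    (hcard : Nat.card B.edgeSet + d * (evenMark d m + oddMark d m) = m) :
    IsMarked d m (B ⊕g markGraph d m) where
  card_edgeSet := by
    rw [card_edgeSet_sum, card_edgeSet_sum, card_edgeSet_cyclePower (two_mul_lt_evenMark d m),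
      card_edgeSet_cyclePower (two_mul_lt_oddMark d m), ← mul_add, hcard]
  le_ncard_neighborSet := by
    refine le_ncard_neighborSet_sum hB (le_ncard_neighborSet_sum (fun x => ?_) fun x => ?_)
    · rw [ncard_neighborSet_cyclePower (two_mul_lt_evenMark d m)]
      omega
    · rw [ncard_neighborSet_cyclePower (two_mul_lt_oddMark d m)]
      omega
  cyclePowerLengths_eq := by
    have hd' : 0 < d := by omega
    rw [cyclePowerLengths_sum hd', cyclePowerLengths_sum hd', cyclePowerLengths_eq_empty hd hfree,
      cyclePowerLengths_cyclePower hd' (two_mul_lt_evenMark d m),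
      cyclePowerLengths_cyclePower hd' (two_mul_lt_oddMark d m), Set.empty_union]
    rfl

theorem choose_le_ncard_setOf_isMarked {α : Type*} [Finite α] {Q : SimpleGraph α}
    {d m e : ℕ} (hd : 2 ≤ d) (hQ : ∀ x, d ≤ (Q.neighborSet x).ncard)
    (hfree : Q.CliqueFree 3) (hcard : d * Nat.card α ≤ Nat.card Q.edgeSet)
    (hm : d * Nat.card α + e + d * (evenMark d m + oddMark d m) = m) :
    (Nat.card Q.edgeSet - d * Nat.card α).choose e ≤
      {G : SimpleGraph (α ⊕ (ZMod (evenMark d m) ⊕ ZMod (oddMark d m))) |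
        IsMarked d m G}.ncard := by
  refine (choose_le_ncard_setOf_le_ncard_neighborSet hQ hcard e).trans ?_
  refine Set.ncard_le_ncard_of_injOn (· ⊕g markGraph d m) ?_ ?_ (Set.toFinite _)
  · rintro B ⟨hBQ, hB, hBcard⟩
    exact isMarked_sum_markGraph hd hB (hfree.comap (.of_le hBQ)) (by rw [hBcard, hm])
  · intro B _ B' _ h
    ext x y
    simpa using congrArg (fun G => G.Adj (.inl x) (.inl y)) h

theorem card_edgeSet_completeBipartiteGraph (α β : Type*) :
    Nat.card (completeBipartiteGraph α β).edgeSet = Nat.card α * Nat.card β := by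
  rw [Nat.card_coe_set_eq, Set.ncard, encard_edgeSet_completeBipartiteGraph]
  simp [ENat.card, Nat.card]

theorem ncard_neighborSet_completeBipartiteGraph (v : ℕ) (x : Fin v ⊕ Fin v) :
    ((completeBipartiteGraph (Fin v) (Fin v)).neighborSet x).ncard = v := by
  rcases x with a | a
  · have hrange : (completeBipartiteGraph (Fin v) (Fin v)).neighborSet (.inl a) =
        Set.range Sum.inr := by ext (b | b) <;> simp
    rw [hrange, ← Nat.card_coe_set_eq, Nat.card_range_of_injective Sum.inr_injective, Nat.card_fin]
  · have hrange : (completeBipartiteGraph (Fin v) (Fin v)).neighborSet (.inr a) =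
        Set.range Sum.inl := by ext (b | b) <;> simp
    rw [hrange, ← Nat.card_coe_set_eq, Nat.card_range_of_injective Sum.inl_injective, Nat.card_fin]

theorem cliqueFree_three_completeBipartiteGraph (α β : Type*) :
    (completeBipartiteGraph α β).CliqueFree 3 :=
  (CompleteBipartiteGraph.bicoloring α β).colorable.cliqueFree (by simp)

/-- The vertex set of the graphs counted for `m` edges: a balanced bipartite part with `v` vertices
on each side and the two cycle powers encoding `m`. -/
abbrev MarkedVertex (v d m : ℕ) : Type :=
  (Fin v ⊕ Fin v) ⊕ (ZMod (evenMark d m) ⊕ ZMod (oddMark d m))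

theorem card_markedVertex (v d m : ℕ) :
    Nat.card (MarkedVertex v d m) = 2 * v + (evenMark d m + oddMark d m) := by
  simp only [Nat.card_sum, Nat.card_fin, Nat.card_zmod]
  omega

theorem exists_pairwise_not_isContained_isMarked {d v e m : ℕ} (hd : 2 ≤ d)
    (hdv : 2 * d ≤ v) (hm : 2 * d * v + e + d * (evenMark d m + oddMark d m) = m) :
    ∃ ℬ : Set (SimpleGraph (MarkedVertex v d m)), (∀ G ∈ ℬ, IsMarked d m G) ∧
      ℬ.Pairwise (fun G H => ¬ G ⊑ H) ∧ (v ^ 2 - 2 * d * v).choose e ≤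
        (2 * v + (evenMark d m + oddMark d m)).factorial * ℬ.ncard := by
  have hcard : d * Nat.card (Fin v ⊕ Fin v) = 2 * d * v := by
    rw [Nat.card_sum, Nat.card_fin]
    ring
  have hedges : Nat.card (completeBipartiteGraph (Fin v) (Fin v)).edgeSet = v ^ 2 := by
    rw [card_edgeSet_completeBipartiteGraph, Nat.card_fin, sq]
  have hchoose := choose_le_ncard_setOf_isMarked (e := e) (m := m) hd
    (fun x => (by omega : d ≤ v).trans_eq (ncard_neighborSet_completeBipartiteGraph v x).symm)
    (cliqueFree_three_completeBipartiteGraph _ _) (by rw [hcard, hedges, sq]; gcongr)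
    (by rw [hcard, hm])
  rw [hcard, hedges] at hchoose
  obtain ⟨ℬ, hℬ, hpair, hle⟩ := exists_subset_ncard_le_factorial_mul
    (𝒜 := {G : SimpleGraph (MarkedVertex v d m) | IsMarked d m G}) fun _ hG => hG.card_edgeSet
  exact ⟨ℬ, hℬ, hpair, card_markedVertex v d m ▸ hchoose.trans hle⟩

end Marking

section Estimates

open Real (log exp)

theorem eventually_mul_log_le_sqrt (a : ℝ) : ∀ᶠ x : ℝ in atTop, a * log x ≤ √x := by
  filter_upwards [((isLittleO_log_rpow_atTop one_half_pos).const_mul_left a).bound one_pos]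
    with x hx
  rw [← Real.sqrt_eq_rpow, one_mul, Real.norm_of_nonneg (Real.sqrt_nonneg x)] at hx
  exact (le_abs_self _).trans hx

theorem eventually_mul_sqrt_add_le_div_log (a b : ℝ) :
    ∀ᶠ x : ℝ in atTop, a * √x + b ≤ x / log x := by
  filter_upwards [eventually_mul_log_le_sqrt (a + |b|), eventually_gt_atTop 1] with x hx hx1
  have hsqrt : 1 ≤ √x := Real.one_le_sqrt.2 hx1.le
  rw [le_div_iff₀ (Real.log_pos hx1)]
  calc (a * √x + b) * log x ≤ ((a + |b|) * √x) * log x := by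
        gcongr
        · exact Real.log_nonneg hx1.le
        · nlinarith [le_abs_self b, abs_nonneg b]
    _ = √x * ((a + |b|) * log x) := by ring
    _ ≤ √x * √x := by gcongr
    _ = x := Real.mul_self_sqrt (by linarith)

theorem pow_le_choose_of_mul_add_le {N e : ℕ} {ρ : ℝ} (hρ : 0 ≤ ρ) (h : ρ * e + e ≤ N) :
    ρ ^ e ≤ (N.choose e : ℝ) := by
  refine le_trans ?_ (Nat.pow_le_choose e N)
  rw [le_div_iff₀ (by positivity)]
  have hsub : ρ * e ≤ ((N + 1 - e : ℕ) : ℝ) := by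
    have hN : (N : ℝ) ≤ ((N + 1 - e : ℕ) : ℝ) + e := by
      exact_mod_cast (by omega : N ≤ (N + 1 - e) + e)
    linarith
  calc ρ ^ e * e.factorial ≤ ρ ^ e * (e : ℝ) ^ e := by
        gcongr
        exact_mod_cast Nat.factorial_le_pow e
    _ = (ρ * e) ^ e := (mul_pow _ _ _).symm
    _ ≤ _ := by gcongr

theorem factorial_le_exp_mul_log {W : ℕ} {x : ℝ} (hx : 0 < x) (hW : W ≤ x) :
    (W.factorial : ℝ) ≤ exp (W * log x) := by
  calc (W.factorial : ℝ) ≤ (W : ℝ) ^ W := by exact_mod_cast Nat.factorial_le_pow W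
    _ ≤ x ^ W := by gcongr
    _ = exp (W * log x) := by rw [← Real.log_pow, Real.exp_log (by positivity)]

theorem mul_log_add_lt_sub_mul_log {x a : ℝ} (hx : 0 < x) (ha : 0 ≤ a) (hL : 1 ≤ log x)
    (hLL : 3 + a + log 8 < log (log x)) :
    x * (log x - 3 * log (log x)) + 3 * x <
      (x - a * (x / log x)) * log (x / (8 * log x ^ 2)) := by
  have : 0 < log x := by linarith
  have h8 : 0 ≤ log 8 := Real.log_nonneg (by norm_num)
  have hlog : log (x / (8 * log x ^ 2)) = log x - log 8 - 2 * log (log x) := by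
    rw [Real.log_div hx.ne' (by positivity), Real.log_mul (by norm_num) (by positivity),
      Real.log_pow]
    push_cast
    ring
  have hgain : x * (3 + a + log 8) < x * log (log x) := by gcongr
  have hloss : 0 ≤ a * (x / log x) * (log 8 + 2 * log (log x)) := by
    have : 0 ≤ log (log x) := by linarith
    positivity
  have hexpand : (x - a * (x / log x)) * (log x - log 8 - 2 * log (log x)) =
      x * log x - x * log 8 - 2 * (x * log (log x)) - a * x +
        a * (x / log x) * (log 8 + 2 * log (log x)) := by
    field_simp
    ring
  rw [hlog, hexpand]
  linarith

/-- A lower bound, valid for large `x`, for the number of marked graphs with `x` edges none of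
which contains another one. -/
noncomputable def antichainBound (x : ℝ) : ℝ := exp (x * (log x - 3 * log (log x)))

theorem antichainBound_mul_factorial_lt_choose {m e W N : ℕ} {a : ℝ} (ha : 0 ≤ a)
    (hL : 3 ≤ log m) (hLL : 3 + a + log 8 < log (log m)) (hm : 8 * log m ^ 2 ≤ m)
    (hW : W ≤ 3 * (m / log m)) (hem : e ≤ m) (he : m - a * (m / log m) ≤ e)
    (hN : (m / log m) ^ 2 / 8 + m ≤ N) :
    antichainBound m * W.factorial < N.choose e := by
  have hm0 : (0 : ℝ) < m := by nlinarith
  have hmL : m / log m * log m = m := div_mul_cancel₀ _ (by linarith)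
  set ρ : ℝ := m / (8 * log m ^ 2)
  have hρ : 1 ≤ ρ := (one_le_div (by positivity)).2 hm
  have hfac : (W.factorial : ℝ) ≤ exp (3 * m) := by
    have hWm : (W : ℝ) ≤ m := by
      refine hW.trans ?_
      rw [mul_div_assoc', div_le_iff₀ (by linarith), mul_comm]
      gcongr
    refine (factorial_le_exp_mul_log hm0 hWm).trans (Real.exp_le_exp.2 ?_)
    calc W * log m ≤ 3 * (m / log m) * log m := by gcongr
      _ = 3 * m := by rw [mul_assoc, hmL]
  have hpow : exp ((m - a * (m / log m)) * log ρ) ≤ ρ ^ e := by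
    rw [← Real.exp_log (show 0 < ρ ^ e by positivity), Real.log_pow]
    gcongr
    exact Real.log_nonneg hρ
  have hchoose : ρ ^ e ≤ N.choose e := by
    refine pow_le_choose_of_mul_add_le (by linarith) (le_trans ?_ hN)
    have hρm : ρ * m = (m / log m) ^ 2 / 8 := by
      simp only [ρ]
      field_simp
    rw [← hρm]
    gcongr
  calc antichainBound m * W.factorial
      ≤ exp (m * (log m - 3 * log (log m))) * exp (3 * m) := by
        unfold antichainBound
        gcongr
    _ = exp (m * (log m - 3 * log (log m)) + 3 * m) := (Real.exp_add _ _).symm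
    _ < exp ((m - a * (m / log m)) * log ρ) :=
        Real.exp_lt_exp.2 (mul_log_add_lt_sub_mul_log hm0 ha (by linarith) hLL)
    _ ≤ N.choose e := hpow.trans hchoose

theorem eventually_mul_marks_le_div_log (d : ℕ) {c : ℝ} (hc : 0 ≤ c) :
    ∀ᶠ m : ℕ in atTop, c * ((evenMark d m + oddMark d m : ℕ) : ℝ) ≤ m / log m := by
  filter_upwards [tendsto_natCast_atTop_atTop.eventually
    (eventually_mul_sqrt_add_le_div_log (c * 4) (c * (4 * d + 5)))] with m hm
  have hmarks : ((evenMark d m + oddMark d m : ℕ) : ℝ) ≤ 4 * m.sqrt + 4 * d + 5 := by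
    exact_mod_cast evenMark_add_oddMark_le d m
  calc c * ((evenMark d m + oddMark d m : ℕ) : ℝ) ≤ c * (4 * √m + 4 * d + 5) := by
        gcongr
        linarith [Real.nat_sqrt_le_real_sqrt (a := m)]
    _ = c * 4 * √m + c * (4 * d + 5) := by ring
    _ ≤ m / log m := hm

theorem eventually_sixteen_mul_log_sq_le : ∀ᶠ x : ℝ in atTop, 16 * log x ^ 2 ≤ x := by
  filter_upwards [eventually_mul_log_le_sqrt 4, eventually_ge_atTop 1] with x hx hx1
  have hlog : 0 ≤ log x := Real.log_nonneg hx1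
  calc 16 * log x ^ 2 = (4 * log x) ^ 2 := by ring
    _ ≤ √x ^ 2 := by gcongr
    _ = x := Real.sq_sqrt (by linarith)

theorem sq_div_eight_add_le_floor_sq_sub {Q x : ℝ} {d : ℕ} (hd : 16 * d + 2 ≤ Q)
    (hx : 16 * x ≤ Q ^ 2) : Q ^ 2 / 8 + x ≤ ((⌊Q⌋₊ ^ 2 - 2 * d * ⌊Q⌋₊ : ℕ) : ℝ) := by
  have hlt : Q < ⌊Q⌋₊ + 1 := Nat.lt_floor_add_one Q
  have : (0 : ℝ) ≤ d := d.cast_nonneg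
  have hdv : (8 * d : ℝ) ≤ ⌊Q⌋₊ := by linarith
  have hdv' : 2 * d * ⌊Q⌋₊ ≤ ⌊Q⌋₊ ^ 2 := by
    rw [sq]
    gcongr
    have : 8 * d ≤ ⌊Q⌋₊ := by exact_mod_cast hdv
    omega
  push_cast [Nat.cast_sub hdv']
  nlinarith

theorem eventually_antichainBound_mul_factorial_lt_choose (d : ℕ) :
    ∀ᶠ m : ℕ in atTop, ∃ e : ℕ, 2 * d ≤ ⌊m / log m⌋₊ ∧
      2 * d * ⌊m / log m⌋₊ + e + d * (evenMark d m + oddMark d m) = m ∧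
      antichainBound m * (2 * ⌊m / log m⌋₊ + (evenMark d m + oddMark d m)).factorial <
        (⌊m / log m⌋₊ ^ 2 - 2 * d * ⌊m / log m⌋₊).choose e := by
  have hlog : Tendsto (fun m : ℕ => log m) atTop atTop :=
    Real.tendsto_log_atTop.comp tendsto_natCast_atTop_atTop
  filter_upwards [eventually_mul_marks_le_div_log d zero_le_one,
    eventually_mul_marks_le_div_log d d.cast_nonneg,
    tendsto_natCast_atTop_atTop.eventually
      (eventually_mul_sqrt_add_le_div_log 0 (16 * d + 2)),
    tendsto_natCast_atTop_atTop.eventually eventually_sixteen_mul_log_sq_le,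
    hlog.eventually_ge_atTop 3, hlog.eventually_ge_atTop (2 * d + 1),
    (Real.tendsto_log_atTop.comp hlog).eventually_gt_atTop (3 + (2 * d + 1) + log 8)]
    with m hP hdP hdQ hm hL hdL hLL
  set P := evenMark d m + oddMark d m
  set Q : ℝ := m / log m
  have hQL : Q * log m = m := div_mul_cancel₀ _ (by linarith)
  have hQ0 : 0 ≤ Q := div_nonneg m.cast_nonneg (by linarith)
  have hv : (⌊Q⌋₊ : ℝ) ≤ Q := Nat.floor_le hQ0
  have hdv : (2 * d * ⌊Q⌋₊ : ℝ) ≤ 2 * d * Q := by gcongr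
  have hQm : (2 * d + 1) * Q ≤ m := by
    rw [← hQL, mul_comm Q]
    gcongr
  obtain ⟨e, he⟩ : ∃ e, 2 * d * ⌊Q⌋₊ + d * P + e = m := by
    refine Nat.le.dest ?_
    have : (2 * d * ⌊Q⌋₊ + d * P : ℝ) ≤ m := by linarith
    exact_mod_cast this
  have he' : (2 * d * ⌊Q⌋₊ + d * P + e : ℝ) = m := by exact_mod_cast he
  refine ⟨e, Nat.le_floor ?_, by omega, antichainBound_mul_factorial_lt_choose
    (a := 2 * d + 1) (by positivity) hL hLL (by nlinarith) ?_ (by omega) (by linarith)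
    (sq_div_eight_add_le_floor_sq_sub (by linarith) ?_)⟩
  · push_cast
    linarith [d.cast_nonneg (α := ℝ)]
  · push_cast
    linarith
  · have : 0 < log m := by linarith
    rw [div_pow, le_div_iff₀ (by positivity), sq (m : ℝ), mul_assoc, mul_left_comm]
    gcongr

end Estimates

section Growth

open Real (log exp)

theorem log_le_log_add_sub_div_three {w u : ℝ} (hw : 3 ≤ w) (hu : w ≤ u) :
    log u ≤ log w + (u - w) / 3 := by
  have hdiv : log u - log w ≤ u / w - 1 := by
    rw [← Real.log_div (by linarith) (by linarith)]
    exact Real.log_le_sub_one_of_pos (div_pos (by linarith) (by linarith))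
  have hthree : u / w - 1 ≤ (u - w) / 3 := by
    rw [div_sub_one (by linarith)]
    exact div_le_div_of_nonneg_left (by linarith) (by norm_num) hw
  linarith

theorem log_sub_four_mul_log_log_le {x σ : ℝ} (hx : 0 < x) (hlog : 3 ≤ log x - log (log x))
    (hloglog : 0 ≤ log (log x)) (hσ : x / log x ≤ σ) :
    log x - 4 * log (log x) ≤ log σ - 3 * log (log σ) := by
  have hlogσ : log x - log (log x) ≤ log σ := by
    rw [← Real.log_div hx.ne' (by linarith)]
    exact Real.log_le_log (div_pos hx (by linarith)) hσ
  have hlogsub : log (log x - log (log x)) ≤ log (log x) :=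
    Real.log_le_log (by linarith) (by linarith)
  linarith [log_le_log_add_sub_div_three hlog hlogσ]

-- The constant 5 works because `(1 + 5 * w) * (1 - 4 * w) ≥ 1` for `0 ≤ w ≤ 1 / 20`.
theorem le_growth_mul_sub_four_mul {x y z : ℝ} (hx : 0 ≤ x) (hy : 0 < y) (hz : 0 ≤ z)
    (hzy : 20 * z ≤ y) : x ≤ (x / y + 5 * (x * z) / y ^ 2) * (y - 4 * z) := by
  have hratio : z / y ≤ 1 / 20 := by
    rw [div_le_iff₀ hy]
    linarith
  have hratio0 : 0 ≤ z / y := by positivity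
  calc x ≤ x * ((1 + 5 * (z / y)) * (1 - 4 * (z / y))) :=
        le_mul_of_one_le_right hx (by nlinarith)
    _ = (x / y + 5 * (x * z) / y ^ 2) * (y - 4 * z) := by
        field_simp

theorem tendsto_div_log_atTop : Tendsto (fun x : ℝ => x / log x) atTop atTop :=
  tendsto_atTop.2 fun b => by simpa using eventually_mul_sqrt_add_le_div_log 0 b

variable {s : ℕ → ℝ}

theorem eventually_log_div_log_log_le (h : ∀ᶠ n : ℕ in atTop, log n / log (log n) +
      5 * (log n * log (log (log n))) / log (log n) ^ 2 ≤ s n) :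
    ∀ᶠ n : ℕ in atTop, log n / log (log n) ≤ s n := by
  have hlog : Tendsto (fun n : ℕ => log n) atTop atTop :=
    Real.tendsto_log_atTop.comp tendsto_natCast_atTop_atTop
  have hlogloglog := Real.tendsto_log_atTop.comp (Real.tendsto_log_atTop.comp hlog)
  filter_upwards [h, hlog.eventually_ge_atTop 0, hlogloglog.eventually_ge_atTop 0]
    with n hn hx hz
  have : 0 ≤ 5 * (log n * log (log (log n))) / log (log n) ^ 2 :=
    div_nonneg (mul_nonneg (by norm_num) (mul_nonneg hx hz)) (sq_nonneg _)
  linarith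

theorem tendsto_atTop_of_growth (h : ∀ᶠ n : ℕ in atTop, log n / log (log n) +
      5 * (log n * log (log (log n))) / log (log n) ^ 2 ≤ s n) :
    Tendsto s atTop atTop :=
  tendsto_atTop_mono' _ (eventually_log_div_log_log_le h)
    (tendsto_div_log_atTop.comp (Real.tendsto_log_atTop.comp tendsto_natCast_atTop_atTop))

theorem eventually_le_antichainBound (h : ∀ᶠ n : ℕ in atTop, log n / log (log n) +
      5 * (log n * log (log (log n))) / log (log n) ^ 2 ≤ s n) :
    ∀ᶠ n : ℕ in atTop, n ≤ antichainBound (s n) := by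
  have hlog : Tendsto (fun n : ℕ => log n) atTop atTop :=
    Real.tendsto_log_atTop.comp tendsto_natCast_atTop_atTop
  have hloglog := Real.tendsto_log_atTop.comp hlog
  have hsmall : ∀ᶠ y : ℝ in atTop, 20 * log y ≤ y := by
    filter_upwards [eventually_mul_log_le_sqrt 20, eventually_ge_atTop 1] with y hy hy1
    exact hy.trans (Real.sqrt_le_self_iff.2 (.inr hy1))
  filter_upwards [h, eventually_log_div_log_log_le h, eventually_gt_atTop 0,
    hlog.eventually_gt_atTop 0, hloglog.eventually_ge_atTop 6, hloglog.eventually hsmall,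
    (Real.tendsto_log_atTop.comp hloglog).eventually_ge_atTop 0] with n hn hns hn0 hx hy hzy hz
  simp only [Function.comp_apply] at hy hzy hz
  rw [antichainBound, ← Real.log_le_iff_le_exp (by exact_mod_cast hn0)]
  calc log n ≤ (log n / log (log n) + 5 * (log n * log (log (log n))) / log (log n) ^ 2) *
        (log (log n) - 4 * log (log (log n))) :=
        le_growth_mul_sub_four_mul hx.le (by linarith) hz hzy
    _ ≤ s n * (log (s n) - 3 * log (log (s n))) := by
        refine mul_le_mul hn (log_sub_four_mul_log_log_le hx (by linarith) hz hns) (by linarith) ?_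
        exact (div_nonneg hx.le (by linarith)).trans hns

theorem eventually_growth_of_tendsto (h : Tendsto (fun n : ℕ =>
      (s n - log n / log (log n)) * log (log n) ^ 2 / (log n * log (log (log n)))) atTop atTop) :
    ∀ᶠ n : ℕ in atTop, log n / log (log n) +
      5 * (log n * log (log (log n))) / log (log n) ^ 2 ≤ s n := by
  have hlog : Tendsto (fun n : ℕ => log n) atTop atTop :=
    Real.tendsto_log_atTop.comp tendsto_natCast_atTop_atTop
  have hloglog := Real.tendsto_log_atTop.comp hlog
  filter_upwards [h.eventually_ge_atTop 5, hlog.eventually_gt_atTop 0,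
    hloglog.eventually_gt_atTop 0, (Real.tendsto_log_atTop.comp hloglog).eventually_gt_atTop 0]
    with n hn hx hy hz
  simp only [Function.comp_apply] at hy hz
  rw [le_div_iff₀ (by positivity)] at hn
  rw [← le_sub_iff_add_le', div_le_iff₀ (by positivity)]
  exact hn

end Growth

section Assembly

theorem eventually_exists_isMarked_sequence {d : ℕ} (hd : 2 ≤ d) :
    ∀ᶠ m : ℕ in atTop, ∃ g : ℕ → SimpleGraph (MarkedVertex ⌊m / Real.log m⌋₊ d m),
      ∀ j : ℕ, j ≤ antichainBound m → IsMarked d m (g j) ∧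
        ∀ i : ℕ, i ≤ antichainBound m → i ≠ j → ¬ g i ⊑ g j := by
  filter_upwards [eventually_antichainBound_mul_factorial_lt_choose d] with m ⟨e, hdv, hm, hlt⟩
  obtain ⟨ℬ, hℬ, hpair, hle⟩ := exists_pairwise_not_isContained_isMarked hd hdv hm
  have hlt_card : ∀ j : ℕ, j ≤ antichainBound m → j < ℬ.ncard := fun j hj => by
    refine lt_of_mul_lt_mul_left (lt_of_lt_of_le ?_ hle) (Nat.zero_le _)
    rw [mul_comm]
    exact_mod_cast (mul_le_mul_of_nonneg_right hj (Nat.cast_nonneg _)).trans_lt hlt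
  obtain ⟨g, hg, hinj⟩ := (Set.finite_Iio ℬ.ncard).exists_injOn_of_encard_le (t := ℬ) <| by
    rw [← (Set.finite_Iio _).cast_ncard_eq, ← (Set.toFinite ℬ).cast_ncard_eq,
      ← Finset.coe_Iio, Set.ncard_coe_finset, Nat.card_Iio]
  refine ⟨g, fun j hj => ⟨hℬ _ (hg (hlt_card j hj)), fun i hi hij => ?_⟩⟩
  exact hpair (hg (hlt_card i hi)) (hg (hlt_card j hj))
    (hinj.ne (hlt_card i hi) (hlt_card j hj) hij)

variable {s : ℕ → ℕ}

theorem exists_isMarked_pairwise_not_isContained {d : ℕ} (hd : 2 ≤ d)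
    (htop : Tendsto s atTop atTop) (hs : ∀ᶠ n : ℕ in atTop, n ≤ antichainBound (s n)) :
    ∃ (v : ℕ → ℕ) (H : ∀ n, SimpleGraph (MarkedVertex (v n) d (s n))) (N : ℕ), ∀ n ≥ N,
      IsMarked d (s n) (H n) ∧ ∀ i ≥ N, i ≠ n → ¬ H i ⊑ H n := by
  obtain ⟨M, hM⟩ := eventually_atTop.1 (eventually_exists_isMarked_sequence hd)
  choose! g hg using hM
  obtain ⟨N, hN⟩ := eventually_atTop.1 ((htop.eventually_ge_atTop M).and hs)
  have hmarked : ∀ n ≥ N, IsMarked d (s n) (g (s n) n) := fun n hn =>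
    (hg (s n) (hN n hn).1 n (hN n hn).2).1
  refine ⟨_, fun n => g (s n) n, N, fun n hn => ⟨hmarked n hn, fun i hi hin hcon => ?_⟩⟩
  have heq : s i = s n := (hmarked i hi).eq_of_isContained (hmarked n hn) hcon
  have hi' := (hN i hi).2
  rw [heq] at hi'
  dsimp only at hcon
  rw [heq] at hcon
  exact (hg (s n) (hN n hn).1 n (hN n hn).2).2 i hi' hin hcon

theorem IsMarked.card_le {α : Type*} [Finite α] {G : SimpleGraph α} {c m n : ℕ}
    (hG : IsMarked (2 * c + 2) m G) (hm : m ≤ c * n) : Nat.card α ≤ n := by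
  have hcard := card_mul_le_two_mul_card_edgeSet hG.le_ncard_neighborSet
  rw [hG.card_edgeSet] at hcard
  by_contra! hlt
  nlinarith

theorem exists_fin_sequence_not_isContained {c : ℕ} (hc : ∀ᶠ n in atTop, s n ≤ c * n)
    (htop : Tendsto s atTop atTop) (hs : ∀ᶠ n : ℕ in atTop, n ≤ antichainBound (s n)) :
    ∃ (G : ∀ n, SimpleGraph (Fin n)) (N : ℕ), ∀ n ≥ N, Nat.card (G n).edgeSet = s n ∧
      (∀ x y, (G n).Adj x y → 2 * c + 1 < ((G n).neighborSet x).ncard) ∧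
      ∀ i ≥ N, i ≠ n → ¬ G i ⊑ G n := by
  obtain ⟨v, H, N₀, hH⟩ := exists_isMarked_pairwise_not_isContained (d := 2 * c + 2) (by omega)
    htop hs
  obtain ⟨N, hN⟩ := eventually_atTop.1 (hc.and (eventually_ge_atTop N₀))
  have hmarked : ∀ n ≥ N, IsMarked (2 * c + 2) (s n) (H n) := fun n hn => (hH n (hN n hn).2).1
  have hmap : ∀ n, ∃ G : SimpleGraph (Fin n), N ≤ n →
      ∃ e : MarkedVertex (v n) (2 * c + 2) (s n) ↪ Fin n, G = (H n).map e := fun n => by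
    by_cases hn : N ≤ n
    · have hcard := (hmarked n hn).card_le (hN n hn).1
      have := Fintype.ofFinite (MarkedVertex (v n) (2 * c + 2) (s n))
      obtain ⟨e⟩ := Function.Embedding.nonempty_of_card_le
        (α := MarkedVertex (v n) (2 * c + 2) (s n)) (β := Fin n) <| by
          rwa [← Nat.card_eq_fintype_card, Fintype.card_fin]
      exact ⟨_, fun _ => ⟨e, rfl⟩⟩
    · exact ⟨⊥, fun h => absurd h hn⟩
  choose G hG using hmap
  refine ⟨G, N, fun n hn => ?_⟩
  obtain ⟨e, he⟩ := hG n hn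
  refine ⟨?_, fun x y hxy => ?_, fun i hi hin hcon => ?_⟩
  · rw [he, card_edgeSet_map, (hmarked n hn).card_edgeSet]
  · rw [he] at hxy ⊢
    obtain ⟨x, _, _, rfl, _⟩ := (map_adj ..).1 hxy
    rw [ncard_neighborSet_map]
    exact (hmarked n hn).le_ncard_neighborSet x
  · obtain ⟨e', he'⟩ := hG i hi
    rw [he, he'] at hcon
    have hnonempty : ∀ x, ((H i).neighborSet x).Nonempty := fun x =>
      Set.nonempty_of_ncard_ne_zero (by have := (hmarked i hi).le_ncard_neighborSet x; omega)
    exact (hH n (hN n hn).2).2 i (hN i hi).2 hin <| isContained_of_isContained_map hnonempty <|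
      (isContained_map _ _).trans hcon

theorem exists_graphFam_sat_eq {c : ℕ} (hc : ∀ᶠ n in atTop, s n ≤ c * n)
    (htop : Tendsto s atTop atTop) (hs : ∀ᶠ n : ℕ in atTop, n ≤ antichainBound (s n)) :
    ∃ 𝓕 : GraphFam, 𝓕.Nonempty ∧ (∀ F ∈ 𝓕, 1 ≤ Nat.card F.2.edgeSet) ∧
      ∀ᶠ n in atTop, sat n 𝓕 = s n := by
  obtain ⟨G, N₀, hG⟩ := exists_fin_sequence_not_isContained hc htop hs
  obtain ⟨N, hN⟩ := eventually_atTop.1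
    ((eventually_ge_atTop N₀).and (hc.and (htop.eventually_ge_atTop 1)))
  refine ⟨properSupergraphs N G, properSupergraphs_nonempty, ?_, ?_⟩
  · rintro F ⟨i, hi, hiF, -⟩
    obtain ⟨hi₀, -, hpos⟩ := hN i hi
    exact hpos.trans ((hG i hi₀).1 ▸ card_edgeSet_le_of_isContained hiF)
  · filter_upwards [eventually_ge_atTop N, eventually_ge_atTop ((2 * c + 1) * (2 * c + 1))]
      with n hn hn'
    obtain ⟨hn₀, hsn, -⟩ := hN n hn
    obtain ⟨hcard, -, hfree⟩ := hG n hn₀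
    rw [← hcard] at hsn ⊢
    exact sat_properSupergraphs hn hn' hsn (fun i hi => (hG i (hN i hi).1).2.1)
      fun i hi hin => hfree i (hN i hi).1 hin.ne

end Assembly

theorem stmt7_general (s : ℕ → ℤ)
    (h1 : ∃ C : ℝ, ∀ᶠ n : ℕ in atTop, (s n : ℝ) ≤ C * n)
    (h2 : ∀ᶠ n : ℕ in atTop, Real.log n / Real.log (Real.log n) +
        5 * (Real.log n * Real.log (Real.log (Real.log n))) / Real.log (Real.log n) ^ 2 ≤ s n) :
    ∃ 𝓕 : GraphFam, 𝓕.Nonempty ∧ (∀ F ∈ 𝓕, 1 ≤ Nat.card F.2.edgeSet) ∧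
      ∀ᶠ n : ℕ in atTop, (sat n 𝓕 : ℤ) = s n := by
  obtain ⟨C, hC⟩ := h1
  obtain ⟨c, hc⟩ := exists_nat_ge C
  have htop : Tendsto s atTop atTop := tendsto_intCast_atTop_iff.1 (tendsto_atTop_of_growth h2)
  have hcast : ∀ᶠ n in atTop, ((s n).toNat : ℤ) = s n :=
    (htop.eventually_ge_atTop 0).mono fun n => Int.toNat_of_nonneg
  have hle : ∀ᶠ n in atTop, (s n).toNat ≤ c * n := by
    filter_upwards [hC] with n hn
    have : (s n : ℝ) ≤ (c * n : ℤ) := by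
      push_cast
      exact hn.trans (by gcongr)
    exact Int.toNat_le.2 (by exact_mod_cast this)
  have hbound : ∀ᶠ n : ℕ in atTop, n ≤ antichainBound (s n).toNat := by
    filter_upwards [eventually_le_antichainBound h2, hcast] with n hn hsn
    have hreal : ((s n).toNat : ℝ) = s n := by exact_mod_cast congrArg (Int.cast : ℤ → ℝ) hsn
    rwa [hreal]
  have htoNat : Tendsto (fun n => (s n).toNat) atTop atTop :=
    tendsto_natCast_atTop_iff.1 (htop.congr' (hcast.mono fun _ h => h.symm))
  obtain ⟨𝓕, hne, hedge, hsat⟩ := exists_graphFam_sat_eq hle htoNat hbound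
  refine ⟨𝓕, hne, hedge, ?_⟩
  filter_upwards [hsat, hcast] with n hn hsn
  rw [hn, hsn]

/-- Every integer sequence with `log n / log log n + ω(log n · log log log n / (log log n)²) ≤ s_n
= O(n)` is eventually equal to `sat(·,𝓕)` for some family `𝓕`. -/
theorem stmt7 (s : ℕ → ℤ)
    (h1 : ∃ C : ℝ, ∀ n : ℕ, 1 ≤ n → (s n : ℝ) ≤ C * n)
    (h2 : Tendsto (fun n : ℕ =>
        ((s n : ℝ) - Real.log n / Real.log (Real.log n)) * (Real.log (Real.log n)) ^ 2 /
          (Real.log n * Real.log (Real.log (Real.log n)))) atTop atTop) :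
    ∃ 𝓕 : GraphFam, 𝓕.Nonempty ∧ (∀ F ∈ 𝓕, 1 ≤ Nat.card F.2.edgeSet) ∧
      ∀ᶠ n : ℕ in atTop, (sat n 𝓕 : ℤ) = s n :=
  stmt7_general s (h1.imp fun _ hC => (eventually_ge_atTop 1).mono hC)
    (eventually_growth_of_tendsto h2)
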